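/- For every integer k ≥ 1 and every finite graph H, R(P_k, H) ≤ |H| + k·√(2·e(H)), where |H| is the number of vertices of H and e(H) its number of edges. -/

import Mathlib

/-- `G` has a copy in `C`: there is an injective graph homomorphism from `G` to `C`,
i.e. `C` contains `G` as a (not necessarily induced) subgraph. -/
def HasCopy {α β : Type*} (G : SimpleGraph α) (C : SimpleGraph β) : Prop :=
  ∃ f : G →g C, Function.Injective f

/-- The Ramsey number `R(G, H)`: the least `N` such that every red-blue colouring of the
edges of `K_N` (encoded by the graph `C` of red edges) contains a red copy of `G` or a
blue copy of `H`. -/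
noncomputable def ramseyNumber {α β : Type*} (G : SimpleGraph α) (H : SimpleGraph β) : ℕ :=
  sInf {N : ℕ | ∀ C : SimpleGraph (Fin N), HasCopy G C ∨ HasCopy H Cᶜ}

/-!
Let `χ` be the chromatic number of `H` and `m = k - 1`. An optimal colouring of `H` has an edge
between any two colour classes, so `(χ - 1) ^ 2 ≤ χ * (χ - 1) ≤ 2 * e(H)`, and it suffices that
`R(P_k, H) ≤ |H| + (χ - 1) * m`.

In a graph without a path on `m + 1` vertices, the stack of a depth-first search never holds more
than `m` vertices, and no finished vertex is adjacent to an unvisited one. Stopping the search when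
exactly `a` vertices are finished thus separates them from all but `m` of the remaining vertices.
Repeating this `χ - 1` times in a red graph on `|H| + (χ - 1) * m` vertices cuts out sets of the
sizes of the colour classes of `H`, with only blue edges between them, and these host a copy of `H`.
-/

open Finset SimpleGraph

theorem hasCopy_iff_isContained {V W : Type*} {G : SimpleGraph V} {H : SimpleGraph W} :
    HasCopy G H ↔ G ⊑ H :=
  ⟨fun ⟨f, hf⟩ ↦ ⟨⟨f, hf⟩⟩, fun ⟨f⟩ ↦ ⟨f.toHom, f.injective⟩⟩

section PathFree

variable {W : Type*} {G : SimpleGraph W} {m : ℕ}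

theorem length_le_of_free_pathGraph (hfree : (pathGraph (m + 1)).Free G) {l : List W}
    (hnodup : l.Nodup) (hchain : l.IsChain G.Adj) : l.length ≤ m := by
  by_contra! hlt
  have hlen : (l.take (m + 1)).length = m + 1 := by grind
  have hne : l.take (m + 1) ≠ [] := by grind
  let p := Walk.ofSupport (l.take (m + 1)) hne (hchain.take _)
  have hp : p.IsPath := by
    rw [Walk.isPath_def, Walk.support_ofSupport]
    exact hnodup.sublist (l.take_sublist _)
  have hp_len : p.length = m := by
    simp [p, hlen]
  exact hfree (hp_len ▸ hp.isContained_pathGraph)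

/-- A snapshot of a depth-first search of `G` restricted to `U`. The set `S` holds the finished
vertices and `stack` is the current search path, its head being the vertex under exploration; the
unvisited vertices are those of `U` lying in neither. -/
structure IsSearchState (G : SimpleGraph W) (U S : Finset W) (stack : List W) : Prop where
  subset : S ⊆ U
  stack_subset : ∀ v ∈ stack, v ∈ U ∧ v ∉ S
  nodup : stack.Nodup
  isChain : stack.IsChain G.Adj
  not_adj : ∀ s ∈ S, ∀ t ∈ U, t ∉ S → t ∉ stack → ¬ G.Adj s t

namespace IsSearchState

variable {U S : Finset W} {stack : List W} {v : W}

theorem empty (G : SimpleGraph W) (U : Finset W) : IsSearchState G U ∅ [] := by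
  constructor <;> simp

theorem push (h : IsSearchState G U S stack) (hvU : v ∈ U) (hvS : v ∉ S) (hv : v ∉ stack)
    (hadj : ∀ u ∈ stack.head?, G.Adj v u) : IsSearchState G U S (v :: stack) where
  subset := h.subset
  stack_subset := List.forall_mem_cons.2 ⟨⟨hvU, hvS⟩, h.stack_subset⟩
  nodup := h.nodup.cons hv
  isChain := List.isChain_cons.2 ⟨hadj, h.isChain⟩
  not_adj s hs t htU htS ht := h.not_adj s hs t htU htS (List.not_mem_of_not_mem_cons ht)

theorem pop [DecidableEq W] (h : IsSearchState G U S (v :: stack))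
    (hv : ∀ t ∈ U, t ∉ S → t ∉ v :: stack → ¬ G.Adj v t) :
    IsSearchState G U (insert v S) stack where
  subset := insert_subset (h.stack_subset v List.mem_cons_self).1 h.subset
  stack_subset := by grind [h.stack_subset, h.nodup]
  nodup := h.nodup.of_cons
  isChain := h.isChain.of_cons
  not_adj := by grind [h.not_adj]

theorem card_add_length_le (h : IsSearchState G U S stack) : #S + stack.length ≤ #U := by
  classical
  have hdisj : Disjoint S stack.toFinset :=
    disjoint_right.2 fun v hv ↦ (h.stack_subset v (List.mem_toFinset.1 hv)).2
  rw [← List.toFinset_card_of_nodup h.nodup, ← card_union_of_disjoint hdisj]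
  exact card_le_card <| union_subset h.subset fun v hv ↦
    (h.stack_subset v (List.mem_toFinset.1 hv)).1

theorem exists_insert [DecidableEq W] (h : IsSearchState G U S stack) (hlt : #S < #U) :
    ∃ v ∉ S, ∃ stack', IsSearchState G U (insert v S) stack' := by
  induction hn : #U - stack.length using Nat.strong_induction_on generalizing stack with
  | _ n ih =>
    have explore {t : W} (htU : t ∈ U) (htS : t ∉ S) (ht : t ∉ stack)
        (hadj : ∀ u ∈ stack.head?, G.Adj t u) :
        ∃ v ∉ S, ∃ stack', IsSearchState G U (insert v S) stack' := by
      have hpush := h.push htU htS ht hadj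
      have hcard := hpush.card_add_length_le
      exact ih _ (by grind) hpush rfl
    cases stack with
    | nil =>
      obtain ⟨t, htU, htS⟩ := exists_mem_notMem_of_card_lt_card hlt
      exact explore htU htS List.not_mem_nil (by simp)
    | cons v stack =>
      by_cases hv : ∃ t ∈ U, t ∉ S ∧ t ∉ v :: stack ∧ G.Adj v t
      · obtain ⟨t, htU, htS, ht, hvt⟩ := hv
        exact explore htU htS ht (by simpa using hvt.symm)
      · push Not at hv
        exact ⟨v, (h.stack_subset v List.mem_cons_self).2, stack, h.pop hv⟩

theorem exists_card_eq (G : SimpleGraph W) {a : ℕ} (ha : a ≤ #U) :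
    ∃ S stack, IsSearchState G U S stack ∧ #S = a := by
  classical
  induction a with
  | zero => exact ⟨∅, [], empty G U, card_empty⟩
  | succ a ih =>
    obtain ⟨S, stack, h, rfl⟩ := ih (by lia)
    obtain ⟨v, hv, stack', hinsert⟩ := h.exists_insert ha
    exact ⟨insert v S, stack', hinsert, card_insert_of_notMem hv⟩

end IsSearchState

theorem exists_compl_isCompleteBetween (hfree : (pathGraph (m + 1)).Free G) {U : Finset W}
    {a : ℕ} (ha : a ≤ #U) :
    ∃ A ⊆ U, ∃ B ⊆ U, #A = a ∧ #U ≤ a + #B + m ∧ Gᶜ.IsCompleteBetween A B := by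
  classical
  obtain ⟨S, stack, h, rfl⟩ := IsSearchState.exists_card_eq G ha
  refine ⟨S, h.subset, U \ (S ∪ stack.toFinset), sdiff_subset, rfl, ?_, fun s hs t ht ↦ ?_⟩
  · have hstack := length_le_of_free_pathGraph hfree h.nodup h.isChain
    have hunion := card_union_le S stack.toFinset
    have hdiff := le_card_sdiff (S ∪ stack.toFinset) U
    have hcard_stack := stack.toFinset_card_le
    lia
  · simp only [coe_sdiff, coe_union, Set.mem_sdiff, Set.mem_union, mem_coe, List.mem_toFinset,
      not_or] at hs ht
    exact (compl_adj ..).2 ⟨fun hst ↦ ht.2.1 (hst ▸ hs), h.not_adj s hs t ht.1 ht.2.1 ht.2.2⟩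

-- Cutting off a part wastes at most `m` vertices, except for the last part, which wastes none:
-- hence the `m` on the right-hand side of `hU`.
theorem exists_pairwise_compl_isCompleteBetween (hfree : (pathGraph (m + 1)).Free G)
    {ι : Type*} (I : Finset ι) (size : ι → ℕ) {U : Finset W}
    (hU : ∑ i ∈ I, (size i + m) ≤ #U + m) :
    ∃ A : ι → Finset W, (∀ i ∈ I, A i ⊆ U ∧ #(A i) = size i) ∧
      (I : Set ι).Pairwise fun i j ↦ Gᶜ.IsCompleteBetween (A i) (A j) := by
  classical
  induction I using Finset.induction generalizing U with
  | empty => exact ⟨fun _ ↦ ∅, by simp⟩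
  | insert i I hi ih =>
    rw [sum_insert hi] at hU
    obtain ⟨S, hSU, B, hBU, hS, hB, hSB⟩ :=
      exists_compl_isCompleteBetween hfree (U := U) (a := size i) (by lia)
    obtain ⟨A, hA, hAA⟩ := ih (U := B) (by lia)
    have hupdate {j : ι} (hj : j ∈ I) : Function.update A i S j = A j :=
      Function.update_of_ne (ne_of_mem_of_not_mem hj hi) _ _
    refine ⟨Function.update A i S, ?_, ?_⟩
    · rw [forall_mem_insert]
      refine ⟨by simpa using ⟨hSU, hS⟩, fun j hj ↦ ?_⟩
      rw [hupdate hj]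
      exact ⟨(hA j hj).1.trans hBU, (hA j hj).2⟩
    · have : Std.Symm fun j k ↦
          Gᶜ.IsCompleteBetween (Function.update A i S j) (Function.update A i S k) :=
        ⟨fun _ _ h ↦ h.symm⟩
      rw [coe_insert, Set.pairwise_insert_of_symm_of_notMem (mem_coe.not.2 hi)]
      refine ⟨fun j hj k hk hjk ↦ ?_, fun j hj ↦ ?_⟩
      · simpa only [hupdate hj, hupdate hk] using hAA hj hk hjk
      · rw [hupdate hj, Function.update_self]
        exact fun s hs t ht ↦ hSB hs ((hA j hj).1 ht)

end PathFree

section Coloring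

variable {V W ι : Type*} {H : SimpleGraph V}

theorem isContained_of_colorClass_embedding {G : SimpleGraph W} (c : H.Coloring ι)
    {A : ι → Set W} (e : ∀ i, c.colorClass i ↪ A i)
    (hA : Pairwise fun i j ↦ G.IsCompleteBetween (A i) (A j)) : H ⊑ G := by
  let f (v : V) : W := e (c v) ⟨v, c.mem_colorClass v⟩
  have hadj {u v : V} (huv : c u ≠ c v) : G.Adj (f u) (f v) :=
    hA huv (Subtype.prop _) (Subtype.prop _)
  have hinj_class {i j : ι} (hij : i = j) (u : c.colorClass i) (v : c.colorClass j)
      (huv : (e i u : W) = e j v) : (u : V) = v := by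
    subst hij
    exact congrArg Subtype.val ((e i).injective (Subtype.ext huv))
  have hinj : Function.Injective f := fun u v huv ↦
    hinj_class (not_imp_comm.1 hadj (huv ▸ G.irrefl)) _ _ huv
  exact ⟨⟨⟨f, fun huv ↦ hadj (c.valid huv)⟩, hinj⟩⟩

theorem exists_adj_of_card_le_chromaticNumber [Fintype ι] (c : H.Coloring ι)
    (hι : Fintype.card ι ≤ H.chromaticNumber) {i j : ι} (hij : i ≠ j) :
    ∃ u v, H.Adj u v ∧ c u = i ∧ c v = j := by
  classical
  by_contra! hno
  let merged : H.Coloring ι := Coloring.mk (fun v ↦ if c v = j then i else c v) fun {u v} huv ↦ by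
    grind [c.valid huv, huv.symm]
  obtain ⟨v, hv⟩ := card_le_chromaticNumber_iff_forall_surjective.1 hι merged j
  have hv_merged : (if c v = j then i else c v) = j := hv
  split_ifs at hv_merged with hvj
  exacts [hij hv_merged, hvj hv_merged]

variable [Fintype V] {n : ℕ}

theorem mul_pred_le_two_mul_card_edgeFinset_of_chromaticNumber_eq [DecidableRel H.Adj]
    (hn : H.chromaticNumber = n) : n * (n - 1) ≤ 2 * #H.edgeFinset := by
  classical
  obtain ⟨c⟩ : H.Colorable n := chromaticNumber_le_iff_colorable.1 hn.le
  have hsurj : Set.SurjOn (fun d : H.Dart ↦ (c d.fst, c d.snd)) (univ : Finset H.Dart)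
      (univ : Finset (Fin n)).offDiag := by
    rintro ⟨i, j⟩ hij
    obtain ⟨u, v, huv, rfl, rfl⟩ :=
      exists_adj_of_card_le_chromaticNumber c (by simp [hn]) (mem_offDiag.1 hij).2.2
    exact ⟨⟨(u, v), huv⟩, mem_coe.2 (mem_univ _), rfl⟩
  calc
    n * (n - 1) = #(univ : Finset (Fin n)).offDiag := by
      rw [offDiag_card, card_fin, Nat.mul_sub_one]
    _ ≤ #(univ : Finset H.Dart) := card_le_card_of_surjOn _ hsurj
    _ = 2 * #H.edgeFinset := by rw [card_univ, dart_card_eq_twice_card_edges]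

theorem isContained_compl_of_free_pathGraph [Fintype W] {G : SimpleGraph W} {m : ℕ}
    (hfree : (pathGraph (m + 1)).Free G) (hn : H.Colorable n)
    (hcard : Fintype.card V + (n - 1) * m ≤ Fintype.card W) : H ⊑ Gᶜ := by
  classical
  obtain ⟨c⟩ := hn
  have hsum : ∑ i, (#{v | c v = i} + m) ≤ #(univ : Finset W) + m := by
    have hclasses : Fintype.card V = ∑ i, #{v | c v = i} :=
      card_eq_sum_card_fiberwise fun _ _ ↦ mem_coe.2 (mem_univ _)
    have hn_mul : n * m ≤ (n - 1) * m + m := by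
      rw [← Nat.succ_mul]
      exact Nat.mul_le_mul_right m (by lia)
    rw [sum_add_distrib, ← hclasses, sum_const, card_fin, smul_eq_mul, card_univ]
    lia
  obtain ⟨A, hA, hAA⟩ := exists_pairwise_compl_isCompleteBetween hfree univ _ hsum
  have hembed (i : Fin n) : Nonempty (c.colorClass i ↪ (A i : Set W)) := by
    simp [Function.Embedding.nonempty_iff_card_le, Coloring.colorClass, Fintype.card_subtype,
      (hA i (mem_univ i)).2]
  exact isContained_of_colorClass_embedding c (fun i ↦ (hembed i).some)
    (by simpa [Set.pairwise_univ] using hAA)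

theorem ramseyNumber_pathGraph_le (m : ℕ) (hn : H.Colorable n) :
    ramseyNumber (pathGraph (m + 1)) H ≤ Fintype.card V + (n - 1) * m := by
  refine Nat.sInf_le fun C ↦ ?_
  rw [hasCopy_iff_isContained, hasCopy_iff_isContained, or_iff_not_imp_left]
  exact fun hfree ↦ isContained_compl_of_free_pathGraph hfree hn (Fintype.card_fin _).ge

end Coloring

theorem stmt_5 (k : ℕ) (hk : 1 ≤ k) (V : Type) [Fintype V] [DecidableEq V]
    (H : SimpleGraph V) [DecidableRel H.Adj] :
    (ramseyNumber (SimpleGraph.pathGraph k) H : ℝ) ≤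
      Fintype.card V + k * Real.sqrt (2 * H.edgeFinset.card) := by
  obtain ⟨m, rfl⟩ := Nat.exists_eq_add_of_le' hk
  obtain ⟨n, hn⟩ := ENat.ne_top_iff_exists.1 (chromaticNumber_ne_top_iff_exists.2
    ⟨_, H.colorable_of_fintype⟩)
  have hsq : (n - 1) ^ 2 ≤ 2 * #H.edgeFinset :=
    calc
      (n - 1) ^ 2 = (n - 1) * (n - 1) := sq _
      _ ≤ n * (n - 1) := Nat.mul_le_mul_right _ (n.sub_le 1)
      _ ≤ 2 * #H.edgeFinset := mul_pred_le_two_mul_card_edgeFinset_of_chromaticNumber_eq hn.symm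
  have hsqrt : ((n - 1 : ℕ) : ℝ) ≤ √(2 * #H.edgeFinset) := Real.le_sqrt_of_sq_le (mod_cast hsq)
  calc
    (ramseyNumber (pathGraph (m + 1)) H : ℝ) ≤ Fintype.card V + (n - 1 : ℕ) * m := mod_cast
      ramseyNumber_pathGraph_le m (chromaticNumber_le_iff_colorable.1 hn.ge)
    _ = Fintype.card V + m * (n - 1 : ℕ) := by rw [mul_comm]
    _ ≤ Fintype.card V + (m + 1 : ℕ) * √(2 * #H.edgeFinset) := by
      gcongr
      exact m.le_succ
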